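/- Let K be a local class of finite Σ-structures. Suppose S ∈ K, A is an induced substructure of S with A ∈ K, and 1 ≤ k ≤ |A|. Then for all A' ∈ K^{|A|,k}_{A,k−1} one has ‖K^{|S|,k}_{S,k−1} ∩ K^{|S|,k}_{A',k}‖ = ‖K^{|S|,k}_{S,k−1} ∩ K^{|S|,k}_{A,k}‖; in particular ‖K^{|S|,k}_{S,k−1}‖ = N(A,k−1) · ‖K^{|S|,k}_{S,k−1} ∩ K^{|S|,k}_{A,k}‖. -/

import Mathlib

open FirstOrder FirstOrder.Language

universe u v

/-- A finite structure for a relational signature `L`, with underlying set a finite subset of `ℕ`,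
given by its relation interpretations (sets of tuples of natural numbers). -/
structure FinStruc (L : FirstOrder.Language.{u, v}) where
  carrier : Finset ℕ
  rel : ∀ ⦃n : ℕ⦄, L.Relations n → Set (Fin n → ℕ)
  rel_mem : ∀ ⦃n : ℕ⦄ (R : L.Relations n) (t : Fin n → ℕ), t ∈ rel R → ∀ i, t i ∈ carrier

variable {L : FirstOrder.Language.{u, v}}

/-- The first-order structure on the underlying set of a `FinStruc`. -/
instance FinStruc.str [L.IsRelational] (A : FinStruc L) :
    L.Structure {x : ℕ // x ∈ A.carrier} where
  funMap := fun f _ => isEmptyElim f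
  RelMap := fun {n} R t => (fun i => (t i : ℕ)) ∈ A.rel R

/-- Satisfaction of a sentence in a `FinStruc`. -/
def FinStruc.Sat [L.IsRelational] (A : FinStruc L) (φ : L.Sentence) : Prop :=
  {x : ℕ // x ∈ A.carrier} ⊨ φ

/-- The General Irreflexivity axiom for a relation symbol `R` and coordinates `i`, `j`:
`∀ x₁ … xₙ, R (x₁, …, xₙ) → ¬ (xᵢ = xⱼ)`. -/
def giSentence {n : ℕ} (R : L.Relations n) (i j : Fin n) : L.Sentence :=
  BoundedFormula.alls
    ((Relations.boundedFormula R fun k => Term.var (Sum.inr k)).imp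
      (Term.bdEqual (Term.var (Sum.inr i)) (Term.var (Sum.inr j))).not)

/-- The General Irreflexivity axiom schema `Φ^Σ_GI`. -/
def GITheory (L : FirstOrder.Language.{u, v}) : L.Theory :=
  { φ | ∃ (n : ℕ) (R : L.Relations n) (i j : Fin n), i ≠ j ∧ φ = giSentence R i j }

/-- A sentence is local if it has the form `∀ x₁ … xₘ, R (x₁, …, xₘ) → ψ` with `m > 0` and
`ψ` quantifier-free. -/
def IsLocalSentence (φ : L.Sentence) : Prop :=
  ∃ m : ℕ, 0 < m ∧ ∃ (R : L.Relations m) (ψ : L.BoundedFormula Empty m), ψ.IsQF ∧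
    φ = BoundedFormula.alls ((Relations.boundedFormula R fun k => Term.var (Sum.inr k)).imp ψ)

/-- A class of finite structures is local if it is the class of models of a set of local
sentences containing the General Irreflexivity axioms. -/
def IsLocalClass [L.IsRelational] (K : Set (FinStruc L)) : Prop :=
  ∃ Φ : L.Theory, (∀ φ ∈ Φ, IsLocalSentence φ) ∧ GITheory L ⊆ Φ ∧
    K = { A : FinStruc L | ∀ φ ∈ Φ, A.Sat φ }

/-- The `n`-frame of a structure: same underlying set, same interpretations of relation symbols
of arity at most `n`, empty interpretation of all higher-arity relation symbols. -/
def FinStruc.frame (A : FinStruc L) (n : ℕ) : FinStruc L where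
  carrier := A.carrier
  rel := fun m R => if m ≤ n then A.rel R else ∅
  rel_mem := by
    intro m R t ht i
    by_cases h : m ≤ n
    · exact A.rel_mem R t (by simpa [h] using ht) i
    · simp [h] at ht

/-- The induced substructure of `B` on a finite set `X`. -/
def FinStruc.restrict (B : FinStruc L) (X : Finset ℕ) : FinStruc L where
  carrier := B.carrier ∩ X
  rel := fun _ R => { t | t ∈ B.rel R ∧ ∀ i, t i ∈ X }
  rel_mem := fun _ R t ht i => Finset.mem_inter.2 ⟨B.rel_mem R t ht.1 i, ht.2 i⟩

/-- `A` is the induced substructure of `B` on the subset `A.carrier` of `B.carrier`. -/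
def FinStruc.IsInducedSub (A B : FinStruc L) : Prop :=
  A.carrier ⊆ B.carrier ∧
    ∀ ⦃n : ℕ⦄ (R : L.Relations n) (t : Fin n → ℕ),
      (∀ i, t i ∈ A.carrier) → (t ∈ A.rel R ↔ t ∈ B.rel R)

/-- `A` is isomorphic to `B`: there is a bijection of the underlying sets preserving all
relations in both directions. -/
def FinStruc.IsIsoTo (A B : FinStruc L) : Prop :=
  ∃ f : ℕ → ℕ, Set.BijOn f ↑A.carrier ↑B.carrier ∧
    ∀ ⦃n : ℕ⦄ (R : L.Relations n) (t : Fin n → ℕ), (∀ i, t i ∈ A.carrier) →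
      (t ∈ A.rel R ↔ (fun i => f (t i)) ∈ B.rel R)

/-- The Adoptive Property. -/
def AdoptiveProperty (K : Set (FinStruc L)) : Prop :=
  ∀ (n : ℕ) (B A A' : FinStruc L), B ∈ K → A ∈ K → A' ∈ K →
    A.IsInducedSub B → A.carrier.card = n → A'.carrier = A.carrier →
    A'.frame (n - 1) = A.frame (n - 1) →
    ∃ B' ∈ K, B'.carrier = B.carrier ∧ B'.frame (n - 1) = B.frame (n - 1) ∧
      ∀ R : L.Relations n,
        B'.rel R = (B.rel R \ { t | ∀ i, t i ∈ A.carrier }) ∪ A'.rel R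

/-- A structure for `L` with underlying set `ℕ`, given by its relation interpretations. -/
structure InfStruc (L : FirstOrder.Language.{u, v}) where
  rel : ∀ ⦃n : ℕ⦄, L.Relations n → Set (Fin n → ℕ)

/-- The first-order structure on `ℕ` determined by an `InfStruc`. -/
def InfStruc.str [L.IsRelational] (M : InfStruc L) : L.Structure ℕ where
  funMap := fun f _ => isEmptyElim f
  RelMap := fun {n} R t => t ∈ M.rel R

/-- Satisfaction of a sentence in an `InfStruc`. -/
def InfStruc.Sat [L.IsRelational] (M : InfStruc L) (φ : L.Sentence) : Prop :=
  @FirstOrder.Language.Sentence.Realize L ℕ M.str φ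

/-- The induced finite substructure of an `InfStruc` on a finite set `X`. -/
def InfStruc.restrict (M : InfStruc L) (X : Finset ℕ) : FinStruc L where
  carrier := X
  rel := fun _ R => { t | t ∈ M.rel R ∧ ∀ i, t i ∈ X }
  rel_mem := fun _ _ _ ht i => ht.2 i

/-- The bundled structures isomorphic to a member of `K`. -/
def toBundled (L : FirstOrder.Language.{u, v}) [L.IsRelational] (K : Set (FinStruc L)) :
    Set (CategoryTheory.Bundled.{0} L.Structure) :=
  { M | ∃ A ∈ K, Nonempty (M ≃[L] {x : ℕ // x ∈ A.carrier}) }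

/-- `K^{X,l}_{A,k}`: the set of `l`-frames of members `B` of `K` with underlying set `X` whose
`k`-frame restricted to the underlying set of `A` is the `k`-frame of `A`. -/
def KsetFr (K : Set (FinStruc L)) (X : Finset ℕ) (l : ℕ) (A : FinStruc L) (k : ℕ) :
    Set (FinStruc L) :=
  { F | ∃ B ∈ K, B.carrier = X ∧ (B.frame k).restrict A.carrier = A.frame k ∧ F = B.frame l }

/-- `N(S,k)`: the number of distinct `(k+1)`-frames of members of `K` on the underlying set of `S`
whose `k`-frame is the `k`-frame of `S`. -/
noncomputable def Ncount (K : Set (FinStruc L)) (S : FinStruc L) (k : ℕ) : ℕ :=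
  (KsetFr K S.carrier (k + 1) S k).ncard

/-! Membership in a local class only depends on the substructures induced on the entries of related
tuples. Hence a member `A'` of `K` can be grafted onto a member `F` with relations of arity at most
`k + 1`, as soon as the two have the same `k`-frame on the underlying set of `A'`: a related tuple
of `F` not contained in `A'` meets `A'` in at most `k` points, so that its entries induce the same
substructure before and after grafting. Restriction to the underlying set of `A` and grafting
therefore form a lens between the frames on `S` and the frames on `A`. Grafting moves the fibres of
restriction bijectively onto each other, which is the uniformity of the counts. -/

attribute [ext] FinStruc

namespace FinStruc

variable {A B F : FinStruc L} {X Y : Finset ℕ} {k l : ℕ}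

theorem mem_frame_rel {n : ℕ} {R : L.Relations n} {t : Fin n → ℕ} :
    t ∈ (B.frame k).rel R ↔ n ≤ k ∧ t ∈ B.rel R := by
  by_cases h : n ≤ k <;> simp [frame, h]

theorem mem_restrict_rel {n : ℕ} {R : L.Relations n} {t : Fin n → ℕ} :
    t ∈ (B.restrict X).rel R ↔ t ∈ B.rel R ∧ ∀ i, t i ∈ X := Iff.rfl

theorem carrier_eq_of_frame_eq (h : A.frame k = B.frame k) : A.carrier = B.carrier :=
  congrArg (·.carrier) h

theorem frame_frame (B : FinStruc L) (k l : ℕ) : (B.frame l).frame k = B.frame (min k l) := by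
  ext n R t
  · rfl
  · simp only [mem_frame_rel, le_min_iff, and_assoc]

theorem frame_restrict (B : FinStruc L) (X : Finset ℕ) (k : ℕ) :
    (B.restrict X).frame k = (B.frame k).restrict X := by
  ext n R t
  · rfl
  · simp only [mem_frame_rel, mem_restrict_rel, and_assoc]

theorem restrict_restrict_of_subset (h : X ⊆ Y) : (B.restrict Y).restrict X = B.restrict X := by
  ext n R t
  · simp only [restrict, Finset.mem_inter]
    exact ⟨fun hx => ⟨hx.1.1, hx.2⟩, fun hx => ⟨⟨hx.1, h hx.2⟩, hx.2⟩⟩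
  · exact ⟨fun ht => ⟨ht.1.1, ht.2⟩, fun ht => ⟨⟨ht.1, fun i => h (ht.2 i)⟩, ht.2⟩⟩

theorem restrict_inter_carrier (B : FinStruc L) (X : Finset ℕ) :
    B.restrict (X ∩ B.carrier) = B.restrict X := by
  ext n R t
  · simp only [restrict, Finset.mem_inter]
    tauto
  · exact ⟨fun ht => ⟨ht.1, fun i => (Finset.mem_inter.1 (ht.2 i)).1⟩,
      fun ht => ⟨ht.1, fun i => Finset.mem_inter.2 ⟨ht.2 i, B.rel_mem R t ht.1 i⟩⟩⟩

theorem restrict_eq_self (h : B.carrier ⊆ X) : B.restrict X = B := by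
  ext n R t
  · simpa only [restrict, Finset.mem_inter, and_iff_left_iff_imp] using @h _
  · exact and_iff_left_of_imp fun ht i => h (B.rel_mem R t ht i)

theorem IsInducedSub.restrict_eq (h : A.IsInducedSub B) : B.restrict A.carrier = A := by
  ext n R t
  · simpa only [restrict, Finset.mem_inter, and_iff_right_iff_imp] using @h.1 _
  · exact ⟨fun ht => (h.2 R t ht.2).2 ht.1, fun ht =>
      ⟨(h.2 R t (A.rel_mem R t ht)).1 ht, A.rel_mem R t ht⟩⟩

/-- The adoption of `A` by `F`: the structure on the union of the underlying sets in which `A`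
overrides all the relations of `F` between elements of `A`. -/
def graft (F A : FinStruc L) : FinStruc L where
  carrier := F.carrier ∪ A.carrier
  rel := fun _ R => { t | (t ∈ F.rel R ∧ ¬ ∀ i, t i ∈ A.carrier) ∨ t ∈ A.rel R }
  rel_mem := fun _ R t ht i => Finset.mem_union.2 <|
    ht.imp (fun h => F.rel_mem R t h.1 i) fun h => A.rel_mem R t h i

theorem mem_graft_rel {n : ℕ} {R : L.Relations n} {t : Fin n → ℕ} :
    t ∈ (F.graft A).rel R ↔ (t ∈ F.rel R ∧ ¬ ∀ i, t i ∈ A.carrier) ∨ t ∈ A.rel R := Iff.rfl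

theorem frame_graft (F A : FinStruc L) (k : ℕ) :
    (F.graft A).frame k = (F.frame k).graft (A.frame k) := by
  ext n R t
  · rfl
  · have hcarrier : (A.frame k).carrier = A.carrier := rfl
    simp only [mem_frame_rel, mem_graft_rel, hcarrier]
    tauto

theorem restrict_graft (F A : FinStruc L) (X : Finset ℕ) :
    (F.graft A).restrict X = (F.restrict X).graft (A.restrict X) := by
  ext n R t
  · simp only [restrict, graft, Finset.mem_inter, Finset.mem_union, or_and_right]
  · have hcarrier : (A.restrict X).carrier = A.carrier ∩ X := rfl
    simp only [mem_restrict_rel, mem_graft_rel, hcarrier, Finset.mem_inter, forall_and]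
    tauto

theorem restrict_graft_carrier (F A : FinStruc L) : (F.graft A).restrict A.carrier = A := by
  ext n R t
  · simp [restrict, graft]
  · exact ⟨fun ht => ht.1.resolve_left fun h => h.2 ht.2, fun ht => ⟨.inr ht, A.rel_mem R t ht⟩⟩

theorem graft_restrict (F : FinStruc L) (X : Finset ℕ) : F.graft (F.restrict X) = F := by
  ext n R t
  · simp only [restrict, graft, Finset.union_eq_left.2 Finset.inter_subset_left]
  · have hcarrier : (F.restrict X).carrier = F.carrier ∩ X := rfl
    have hmem := F.rel_mem R t
    simp only [mem_restrict_rel, mem_graft_rel, hcarrier, Finset.mem_inter, forall_and]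
    tauto

theorem graft_graft (h : A.carrier ⊆ B.carrier) : (F.graft A).graft B = F.graft B := by
  ext n R t
  · have := @h n
    simp only [graft, Finset.mem_union]
    tauto
  · have hA : t ∈ A.rel R → ∀ i, t i ∈ B.carrier := fun ht i => h (A.rel_mem R t ht i)
    have hAB : (∀ i, t i ∈ A.carrier) → ∀ i, t i ∈ B.carrier := fun ht i => h (ht i)
    simp only [mem_graft_rel]
    tauto

/-- The inclusion of an induced substructure, as an embedding of first-order structures. -/
def restrictEmbedding [L.IsRelational] (B : FinStruc L) (X : Finset ℕ) :
    {x // x ∈ (B.restrict X).carrier} ↪[L] {x // x ∈ B.carrier} where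
  toFun x := ⟨x, (Finset.mem_inter.1 x.2).1⟩
  inj' _ _ h := Subtype.ext (congrArg Subtype.val h :)
  map_fun' f := isEmptyElim f
  map_rel' _ t := ⟨fun h => ⟨h, fun i => (Finset.mem_inter.1 (t i).2).2⟩, fun h => h.1⟩

end FinStruc

namespace IsLocalSentence

variable [L.IsRelational] {φ : L.Sentence} {B : FinStruc L}

theorem sat_restrict (hφ : IsLocalSentence φ) (hB : B.Sat φ) (X : Finset ℕ) :
    (B.restrict X).Sat φ := by
  obtain ⟨m, -, R, ψ, hψ, rfl⟩ := hφ
  refine BoundedFormula.realize_alls.2 fun xs hR => ?_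
  have hψB := BoundedFormula.realize_alls.1 hB (B.restrictEmbedding X ∘ xs) hR.1
  rw [← hψ.realize_embedding (B.restrictEmbedding X)]
  convert hψB

theorem sat_of_forall_restrict_sat (hφ : IsLocalSentence φ)
    (hB : ∀ ⦃n⦄ (R : L.Relations n), ∀ t ∈ B.rel R, (B.restrict (Finset.univ.image t)).Sat φ) :
    B.Sat φ := by
  obtain ⟨m, -, R, ψ, hψ, rfl⟩ := hφ
  refine BoundedFormula.realize_alls.2 fun xs (hR : (fun i => (xs i : ℕ)) ∈ B.rel R) => ?_
  set X := Finset.univ.image fun i => (xs i : ℕ)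
  have hX : ∀ i, (xs i : ℕ) ∈ X := fun i => Finset.mem_image_of_mem _ (Finset.mem_univ i)
  have hψX := BoundedFormula.realize_alls.1 (hB R _ hR)
    (fun i => ⟨xs i, Finset.mem_inter.2 ⟨(xs i).2, hX i⟩⟩) ⟨hR, hX⟩
  rw [← hψ.realize_embedding (B.restrictEmbedding X)] at hψX
  convert hψX
  rfl

end IsLocalSentence

theorem carrier_eq_of_mem_ksetFr {K : Set (FinStruc L)} {A F : FinStruc L} {X : Finset ℕ}
    {k l : ℕ} (hF : F ∈ KsetFr K X l A k) : F.carrier = X := by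
  obtain ⟨B, -, hX, -, rfl⟩ := hF
  exact hX

namespace IsLocalClass

variable [L.IsRelational] {K : Set (FinStruc L)} {A B F S : FinStruc L} {X : Finset ℕ} {k l : ℕ}

theorem restrict_mem (hK : IsLocalClass K) (hB : B ∈ K) (X : Finset ℕ) : B.restrict X ∈ K := by
  obtain ⟨Φ, hΦ, -, rfl⟩ := hK
  exact fun φ hφ => (hΦ φ hφ).sat_restrict (hB φ hφ) X

theorem mem_of_forall_restrict_mem (hK : IsLocalClass K)
    (hB : ∀ ⦃n⦄ (R : L.Relations n), ∀ t ∈ B.rel R, B.restrict (Finset.univ.image t) ∈ K) :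
    B ∈ K := by
  obtain ⟨Φ, hΦ, -, rfl⟩ := hK
  exact fun φ hφ => (hΦ φ hφ).sat_of_forall_restrict_sat fun _ R t ht => hB R t ht φ hφ

theorem injective_of_mem_rel (hK : IsLocalClass K) (hB : B ∈ K) {n : ℕ} {R : L.Relations n}
    {t : Fin n → ℕ} (ht : t ∈ B.rel R) : Function.Injective t := by
  obtain ⟨Φ, -, hGI, rfl⟩ := hK
  intro i j hij
  by_contra hne
  have hsat := BoundedFormula.realize_alls.1 (hB _ (hGI ⟨n, R, i, j, hne, rfl⟩))
    (fun i => ⟨t i, B.rel_mem R _ ht i⟩) ht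
  rw [BoundedFormula.realize_not] at hsat
  exact hsat (Subtype.ext hij)

theorem frame_eq_self (hK : IsLocalClass K) (hB : B ∈ K) (hk : B.carrier.card ≤ k) :
    B.frame k = B := by
  ext n R t
  · rfl
  · rw [FinStruc.mem_frame_rel, and_iff_right_iff_imp]
    intro ht
    calc
      n = (Finset.univ.image t).card := by
        rw [Finset.card_image_of_injective _ (hK.injective_of_mem_rel hB ht), Finset.card_fin]
      _ ≤ B.carrier.card := Finset.card_le_card <| by
        simpa only [Finset.image_subset_iff] using fun i _ => B.rel_mem R t ht i
      _ ≤ k := hk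

theorem frame_restrict_eq_restrict (hK : IsLocalClass K) (hB : B ∈ K) (hX : X.card ≤ k) :
    (B.frame k).restrict X = B.restrict X := by
  rw [← FinStruc.frame_restrict]
  exact hK.frame_eq_self (hK.restrict_mem hB X)
    ((Finset.card_le_card Finset.inter_subset_right).trans hX)

theorem frame_mem (hK : IsLocalClass K) (hB : B ∈ K) (k : ℕ) : B.frame k ∈ K := by
  refine hK.mem_of_forall_restrict_mem fun n R t ht => ?_
  have hcard : (Finset.univ.image t).card ≤ k :=
    (Finset.card_image_le.trans_eq (Finset.card_fin n)).trans (FinStruc.mem_frame_rel.1 ht).1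
  rw [hK.frame_restrict_eq_restrict hB hcard]
  exact hK.restrict_mem hB _

theorem restrict_graft_eq_restrict (hK : IsLocalClass K) (hF : F ∈ K) (hA : A ∈ K)
    (hFA : (F.frame k).restrict A.carrier = A.frame k) (hX : X.card ≤ k + 1)
    (hXA : ¬ X ⊆ A.carrier) : (F.graft A).restrict X = F.restrict X := by
  set Y := X ∩ A.carrier
  have hY : Y.card ≤ k := Nat.lt_succ_iff.1 <| (Finset.card_lt_card <|
    Finset.inter_subset_left.ssubset_of_ne fun h => hXA (Finset.inter_eq_left.1 h)).trans_le hX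
  have hAY : A.restrict X = (F.restrict X).restrict Y := calc
    A.restrict X = A.restrict Y := (A.restrict_inter_carrier X).symm
    _ = (A.frame k).restrict Y := (hK.frame_restrict_eq_restrict hA hY).symm
    _ = (F.frame k).restrict Y := by
      rw [← hFA, FinStruc.restrict_restrict_of_subset Finset.inter_subset_right]
    _ = F.restrict Y := hK.frame_restrict_eq_restrict hF hY
    _ = (F.restrict X).restrict Y :=
      (FinStruc.restrict_restrict_of_subset Finset.inter_subset_left).symm
  rw [FinStruc.restrict_graft, hAY, FinStruc.graft_restrict]

theorem graft_mem (hK : IsLocalClass K) (hF : F ∈ K) (hA : A ∈ K) (hFk : F.frame (k + 1) = F)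
    (hFA : (F.frame k).restrict A.carrier = A.frame k) : F.graft A ∈ K := by
  refine hK.mem_of_forall_restrict_mem fun n R t ht => ?_
  by_cases htA : Finset.univ.image t ⊆ A.carrier
  · rw [← FinStruc.restrict_restrict_of_subset htA, FinStruc.restrict_graft_carrier]
    exact hK.restrict_mem hA _
  · have htF : t ∈ F.rel R := (ht.resolve_right fun h => htA <| by
      simpa only [Finset.image_subset_iff] using fun i _ => A.rel_mem R t h i).1
    have hn : n ≤ k + 1 := (FinStruc.mem_frame_rel.1 (hFk ▸ htF)).1
    have hcard : (Finset.univ.image t).card ≤ k + 1 :=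
      (Finset.card_image_le.trans_eq (Finset.card_fin n)).trans hn
    rw [hK.restrict_graft_eq_restrict hF hA hFA hcard htA]
    exact hK.restrict_mem hF _

theorem mem_ksetFr_iff (hK : IsLocalClass K) (hkl : k ≤ l) :
    F ∈ KsetFr K X l A k ↔
      F ∈ K ∧ F.carrier = X ∧ F.frame l = F ∧ (F.frame k).restrict A.carrier = A.frame k := by
  constructor
  · rintro ⟨B, hB, hX, hBA, rfl⟩
    exact ⟨hK.frame_mem hB l, hX, by rw [FinStruc.frame_frame, min_self],
      by rw [FinStruc.frame_frame, min_eq_left hkl, hBA]⟩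
  · rintro ⟨hF, hX, hFl, hFA⟩
    exact ⟨F, hF, hX, hFA, hFl.symm⟩

theorem mem_ksetFr_carrier_iff (hK : IsLocalClass K) (hkl : k ≤ l) :
    F ∈ KsetFr K S.carrier l S k ↔ F ∈ K ∧ F.frame l = F ∧ F.frame k = S.frame k := by
  rw [hK.mem_ksetFr_iff hkl]
  constructor
  · rintro ⟨hF, hX, hFl, hFS⟩
    exact ⟨hF, hFl, by rwa [FinStruc.restrict_eq_self (B := F.frame k) hX.subset] at hFS⟩
  · rintro ⟨hF, hFl, hFS⟩
    have hX : F.carrier = S.carrier := FinStruc.carrier_eq_of_frame_eq hFS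
    exact ⟨hF, hX, hFl, (FinStruc.restrict_eq_self (B := F.frame k) hX.subset).trans hFS⟩

theorem ksetFr_inter_ksetFr_eq_inter_preimage (hK : IsLocalClass K) (hkl : k ≤ l) :
    KsetFr K S.carrier l S k ∩ KsetFr K S.carrier l A l =
      KsetFr K S.carrier l S k ∩ (fun F => F.restrict A.carrier) ⁻¹' {A.frame l} := by
  ext F
  refine and_congr_right fun hFS => ?_
  obtain ⟨hF, hX, hFl, -⟩ := (hK.mem_ksetFr_iff hkl).1 hFS
  simp only [hK.mem_ksetFr_iff le_rfl, hF, hX, hFl, true_and, Set.mem_preimage,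
    Set.mem_singleton_iff]

theorem restrict_mem_ksetFr (hK : IsLocalClass K) (hAS : A.IsInducedSub S) (hkl : k ≤ l)
    (hF : F ∈ KsetFr K S.carrier l S k) : F.restrict A.carrier ∈ KsetFr K A.carrier l A k := by
  rw [hK.mem_ksetFr_carrier_iff hkl] at hF ⊢
  obtain ⟨hF, hFl, hFS⟩ := hF
  refine ⟨hK.restrict_mem hF _, by rw [FinStruc.frame_restrict, hFl], ?_⟩
  rw [FinStruc.frame_restrict, hFS, ← FinStruc.frame_restrict, hAS.restrict_eq]

theorem graft_mem_ksetFr (hK : IsLocalClass K) (hAS : A.IsInducedSub S)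
    (hF : F ∈ KsetFr K S.carrier (k + 1) S k) (hB : B ∈ KsetFr K A.carrier (k + 1) A k) :
    F.graft B ∈ KsetFr K S.carrier (k + 1) S k := by
  have hFA := hK.restrict_mem_ksetFr hAS k.le_succ hF
  rw [hK.mem_ksetFr_carrier_iff k.le_succ] at hF hB hFA ⊢
  obtain ⟨hF, hFk, hFS⟩ := hF
  obtain ⟨hB, hBk, hBA⟩ := hB
  have hBX : B.carrier = A.carrier := FinStruc.carrier_eq_of_frame_eq hBA
  refine ⟨hK.graft_mem hF hB hFk ?_, by rw [FinStruc.frame_graft, hFk, hBk], ?_⟩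
  · rw [hBX, hBA, ← FinStruc.frame_restrict, hFA.2.2]
  · rw [FinStruc.frame_graft, hFS, hBA, ← FinStruc.frame_graft, ← hAS.restrict_eq,
      FinStruc.graft_restrict]

end IsLocalClass

/-- A lens between the sets `s` and `t`: `put a b` is the element of `s` obtained from `a` by
changing its view `get a` to `b`. The laws `put a (get a) = a` and `put (put a b) c = put a c` of a
very well-behaved lens are only required through their consequence `put_put_get`. -/
structure IsLensOn {α β : Type*} (get : α → β) (put : α → β → α) (s : Set α) (t : Set β) :
    Prop where
  get_mem : ∀ a ∈ s, get a ∈ t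
  put_mem : ∀ a ∈ s, ∀ b ∈ t, put a b ∈ s
  get_put : ∀ a ∈ s, ∀ b ∈ t, get (put a b) = b
  put_put_get : ∀ a ∈ s, ∀ b ∈ t, put (put a b) (get a) = a

theorem IsLocalClass.isLensOn_restrict_graft [L.IsRelational] {K : Set (FinStruc L)}
    (hK : IsLocalClass K) {A S : FinStruc L} (hAS : A.IsInducedSub S) (k : ℕ) :
    IsLensOn (fun F => F.restrict A.carrier) FinStruc.graft
      (KsetFr K S.carrier (k + 1) S k) (KsetFr K A.carrier (k + 1) A k) where
  get_mem _ hF := hK.restrict_mem_ksetFr hAS k.le_succ hF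
  put_mem _ hF _ hB := hK.graft_mem_ksetFr hAS hF hB
  get_put F _ B hB := by
    rw [← carrier_eq_of_mem_ksetFr hB, FinStruc.restrict_graft_carrier]
  put_put_get F hF B hB := by
    have hBF : B.carrier = (F.restrict A.carrier).carrier :=
      (carrier_eq_of_mem_ksetFr hB).trans
        (carrier_eq_of_mem_ksetFr (hK.restrict_mem_ksetFr hAS k.le_succ hF)).symm
    rw [FinStruc.graft_graft hBF.subset, FinStruc.graft_restrict]

section Cardinality

open scoped Cardinal

namespace IsLensOn

variable {α β : Type*} {get : α → β} {put : α → β → α} {s : Set α} {t : Set β}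

theorem put_mem_fiber (h : IsLensOn get put s t) {a : α} {b : β} (ha : a ∈ s) (hb : b ∈ t) :
    put a b ∈ s ∩ get ⁻¹' {b} :=
  ⟨h.put_mem a ha b hb, h.get_put a ha b hb⟩

theorem put_put_of_mem_fiber (h : IsLensOn get put s t) {a : α} {b c : β}
    (ha : a ∈ s ∩ get ⁻¹' {b}) (hc : c ∈ t) : put (put a c) b = a := by
  obtain ⟨ha, rfl⟩ := ha
  exact h.put_put_get a ha c hc

theorem mk_fiber_eq (h : IsLensOn get put s t) {b c : β} (hb : b ∈ t) (hc : c ∈ t) :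
    #↑(s ∩ get ⁻¹' {b}) = #↑(s ∩ get ⁻¹' {c}) :=
  Cardinal.mk_congr
    { toFun a := ⟨put a c, h.put_mem_fiber a.2.1 hc⟩
      invFun a := ⟨put a b, h.put_mem_fiber a.2.1 hb⟩
      left_inv a := Subtype.ext (h.put_put_of_mem_fiber a.2 hc)
      right_inv a := Subtype.ext (h.put_put_of_mem_fiber a.2 hb) }

end IsLensOn

theorem IsLensOn.mk_eq_mk_mul_mk_fiber {α β : Type u} {get : α → β} {put : α → β → α}
    {s : Set α} {t : Set β} (h : IsLensOn get put s t) {b : β} (hb : b ∈ t) :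
    #s = #t * #↑(s ∩ get ⁻¹' {b}) :=
  Cardinal.mk_congr
    { toFun a := (⟨get a, h.get_mem a a.2⟩, ⟨put a b, h.put_mem_fiber a.2 hb⟩)
      invFun p := ⟨put p.2 p.1, h.put_mem p.2 p.2.2.1 p.1 p.1.2⟩
      left_inv a := Subtype.ext (h.put_put_get a a.2 b hb)
      right_inv p := Prod.ext (Subtype.ext (h.get_put p.2 p.2.2.1 p.1 p.1.2))
        (Subtype.ext (h.put_put_of_mem_fiber p.2.2 p.1.2)) }

theorem statement_9_general (L : FirstOrder.Language.{u, v}) [L.IsRelational]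
    (K : Set (FinStruc L)) (hK : IsLocalClass K) (S A : FinStruc L) (hA : A ∈ K)
    (hsub : A.IsInducedSub S) (k : ℕ) :
    (∀ A' ∈ KsetFr K A.carrier (k + 1) A k,
        #↑(KsetFr K S.carrier (k + 1) S k ∩ KsetFr K S.carrier (k + 1) A' (k + 1)) =
          #↑(KsetFr K S.carrier (k + 1) S k ∩ KsetFr K S.carrier (k + 1) A (k + 1))) ∧
      #(KsetFr K S.carrier (k + 1) S k) =
        #(KsetFr K A.carrier (k + 1) A k) *
          #↑(KsetFr K S.carrier (k + 1) S k ∩ KsetFr K S.carrier (k + 1) A (k + 1)) := by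
  have hlens := hK.isLensOn_restrict_graft hsub k
  have hAk : A.frame (k + 1) ∈ KsetFr K A.carrier (k + 1) A k :=
    ⟨A, hA, rfl, FinStruc.restrict_eq_self subset_rfl, rfl⟩
  simp only [hK.ksetFr_inter_ksetFr_eq_inter_preimage k.le_succ]
  refine ⟨fun A' hA' => ?_, hlens.mk_eq_mk_mul_mk_fiber hAk⟩
  obtain ⟨-, hX, hA'k, -⟩ := (hK.mem_ksetFr_iff k.le_succ).1 hA'
  rw [hX, hA'k]
  exact hlens.mk_fiber_eq hA' hAk

end Cardinality

/-- Lemma on uniformity of frame counts: for `S ∈ K`, `A` an induced substructure of `S` and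
`1 ≤ k ≤ |A|`, all members of `K^{|A|,k}_{A,k-1}` determine intersections of the same size, and
`‖K^{|S|,k}_{S,k-1}‖ = N(A,k-1) · ‖K^{|S|,k}_{S,k-1} ∩ K^{|S|,k}_{A,k}‖`. -/
theorem statement_9 (L : FirstOrder.Language.{u, v}) [L.IsRelational]
    [∀ n, Finite (L.Relations n)] (K : Set (FinStruc L)) (hK : IsLocalClass K)
    (S A : FinStruc L) (hS : S ∈ K) (hsub : A.IsInducedSub S)
    (k : ℕ) (hk1 : 1 ≤ k) (hk2 : k ≤ A.carrier.card) :
    (∀ A' ∈ KsetFr K A.carrier k A (k - 1),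
        (KsetFr K S.carrier k S (k - 1) ∩ KsetFr K S.carrier k A' k).ncard =
          (KsetFr K S.carrier k S (k - 1) ∩ KsetFr K S.carrier k A k).ncard) ∧
      (KsetFr K S.carrier k S (k - 1)).ncard =
        (KsetFr K A.carrier k A (k - 1)).ncard *
          (KsetFr K S.carrier k S (k - 1) ∩ KsetFr K S.carrier k A k).ncard := by
  obtain ⟨k, rfl⟩ := Nat.exists_eq_add_of_le' hk1
  have hA : A ∈ K := hsub.restrict_eq ▸ hK.restrict_mem hS A.carrier
  obtain ⟨hfib, hprod⟩ := statement_9_general L K hK S A hA hsub k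
  exact ⟨fun A' hA' => congrArg Cardinal.toNat (hfib A' hA'),
    (congrArg Cardinal.toNat hprod).trans (Cardinal.toNat_mul _ _)⟩
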